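/- arXiv:1512.03992 — 2 statements merged into one kernel-verified Lean document; each statement's English description precedes it below -/
import Mathlib

section
/- Let γ := 1 − e^{−1} and, for a bounded Borel function h : ℕ → ℝ, define h̃(x) := E[ ∫_0^∞ γ λ h(N_s + x) e^{−N_s} ds ] for x ∈ ℕ (the integral is well defined and |h̃(x)| ≤ sup|h| since E[∫_0^∞ γ λ e^{−N_s} ds] = 1). Then for every x ∈ ℕ, h̃(x) = γ h(x) + (1 − γ) h̃(x + 1). -/
/-!
By Fubini, `h̃` only depends on the image `ν` of `P ⊗ ds|_{(0,∞)}` under `(ω, s) ↦ N_s(ω)`, the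
expected occupation measure of `N`. Each state has expected occupation time
`∫₀^∞ e^{-λs} (λs)^n / n! ds = 1/λ` (a Gamma integral), so `ν` is `1/λ` times counting measure
(`occupation_eq`) and `h̃(x) = ∑ₙ γ h(n + x) e^{-n}` (`htilde_eq_tsum`).
Splitting off the term `n = 0` and using `e^{-1} = 1 - γ` gives the recursion.

Fubini needs joint measurability of `N`, which follows from monotonicity and right-continuity
of the paths (`IsPoissonProcess.measurable_uncurry`).
-/

open MeasureTheory ProbabilityTheory Filter Set
open scoped ENNReal

noncomputable section

/-- The natural filtration of a process `N`: `F_t = σ(N_u : u ≤ t)`. -/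
def natFil {Ω : Type*} (N : ℝ → Ω → ℝ) (t : ℝ) : MeasurableSpace Ω :=
  ⨆ (u : ℝ) (_ : u ≤ t), MeasurableSpace.comap (N u) inferInstance

/-- The σ-algebra `F_∞ = σ(N_s : s ≥ 0)` generated by the whole process. -/
def natFilInf {Ω : Type*} (N : ℝ → Ω → ℝ) : MeasurableSpace Ω :=
  ⨆ (u : ℝ) (_ : (0 : ℝ) ≤ u), MeasurableSpace.comap (N u) inferInstance

/-- The progressive enlargement `G_t = F_t ⊔ σ({τ ≤ s} : s ≤ t)` of the natural
filtration of `N` by the random time `τ`. -/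
def progEnl {Ω : Type*} (N : ℝ → Ω → ℝ) (τ : Ω → ℝ) (t : ℝ) : MeasurableSpace Ω :=
  natFil N t ⊔
    MeasurableSpace.generateFrom {A : Set Ω | ∃ s : ℝ, s ≤ t ∧ A = {ω | τ ω ≤ s}}

/-- `N` is a Poisson process with intensity `lam > 0` (extended by `0` to negative
times): paths are nondecreasing, right-continuous and `ℕ`-valued, and for
`0 ≤ s ≤ t` the increment `N_t - N_s` is independent of `F_s = σ(N_u : u ≤ s)` and
Poisson distributed with parameter `lam * (t - s)`. -/
structure IsPoissonProcess {Ω : Type*} {m0 : MeasurableSpace Ω} (P : MeasureTheory.Measure Ω)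
    (N : ℝ → Ω → ℝ) (lam : ℝ) : Prop where
  lam_pos : 0 < lam
  meas : ∀ t : ℝ, Measurable (N t)
  zero : ∀ ω, ∀ t : ℝ, t ≤ 0 → N t ω = 0
  mono : ∀ ω, Monotone fun t => N t ω
  rightCont : ∀ ω, ∀ t : ℝ, ContinuousWithinAt (fun s => N s ω) (Set.Ici t) t
  natValued : ∀ (t : ℝ) (ω : Ω), ∃ n : ℕ, N t ω = n
  indep : ∀ s t : ℝ, 0 ≤ s → s ≤ t →
    ProbabilityTheory.Indep
      (MeasurableSpace.comap (fun ω => N t ω - N s ω) inferInstance) (natFil N s) P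
  law : ∀ s t : ℝ, 0 ≤ s → s ≤ t → ∀ n : ℕ,
    P {ω | N t ω - N s ω = (n : ℝ)} =
      ENNReal.ofReal (Real.exp (-(lam * (t - s))) * (lam * (t - s)) ^ n / (n.factorial : ℝ))

section Occupation

variable {Ω : Type*} {m0 : MeasurableSpace Ω} {P : Measure Ω} {N : ℝ → Ω → ℝ} {lam : ℝ}

/-- Since paths are nondecreasing and right-continuous, `{N_s < c}` is the countable union over
rational `q` of the rectangles `{N_q < c} × {s < q}`. -/
lemma IsPoissonProcess.measurable_uncurry (hN : IsPoissonProcess P N lam) :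
    Measurable fun p : Ω × ℝ => N p.2 p.1 := by
  refine measurable_of_Iio fun c => ?_
  have key : (fun p : Ω × ℝ => N p.2 p.1) ⁻¹' Iio c =
      ⋃ q : ℚ, {ω | N q ω < c} ×ˢ Iio (q : ℝ) := by
    ext ⟨ω, s⟩
    simp only [mem_preimage, mem_Iio, mem_iUnion, mem_prod, mem_ofPred_eq]
    constructor
    · intro hs
      have h1 : ∀ᶠ u in nhdsWithin s (Ioi s), N u ω < c :=
        ((hN.rightCont ω s).mono Ioi_subset_Ici_self).eventually (Iio_mem_nhds hs)
      obtain ⟨u, hu, hsub⟩ := mem_nhdsGT_iff_exists_Ioo_subset.1 h1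
      obtain ⟨q, hq1, hq2⟩ := exists_rat_btwn (mem_Ioi.1 hu)
      exact ⟨q, hsub ⟨hq1, hq2⟩, hq1⟩
    · rintro ⟨q, hq1, hq2⟩
      exact (hN.mono ω hq2.le).trans_lt hq1
  rw [key]
  exact MeasurableSet.iUnion fun q =>
    (measurableSet_lt (hN.meas q) measurable_const).prod measurableSet_Iio

/-- The Poisson weights integrate to `1/λ` over `(0, ∞)`. -/
lemma lintegral_poisson_weight (hl : 0 < lam) (n : ℕ) :
    ∫⁻ s in Ioi (0 : ℝ),
      ENNReal.ofReal (Real.exp (-(lam * s)) * (lam * s) ^ n / (n.factorial : ℝ))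
      = ENNReal.ofReal lam⁻¹ := by
  have hint : ∫ s in Ioi (0 : ℝ), Real.exp (-(lam * s)) * (lam * s) ^ n / (n.factorial : ℝ)
      = lam⁻¹ := by
    have hG := Real.integral_rpow_mul_exp_neg_mul_Ioi (a := (n : ℝ) + 1) (r := lam)
      (by positivity) hl
    rw [Real.Gamma_nat_eq_factorial] at hG
    have : ∀ s : ℝ, Real.exp (-(lam * s)) * (lam * s) ^ n / (n.factorial : ℝ)
        = lam ^ n / (n.factorial : ℝ) * (s ^ ((n : ℝ) + 1 - 1) * Real.exp (-(lam * s))) := by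
      intro s
      rw [add_sub_cancel_right, Real.rpow_natCast, mul_pow]
      ring
    simp_rw [this]
    rw [integral_const_mul, hG, ← Nat.cast_succ, Real.rpow_natCast, one_div, inv_pow,
      Nat.succ_eq_add_one, pow_succ]
    have := n.factorial_pos
    field_simp
  -- A nonintegrable function would have Bochner integral `0`.
  have hi : Integrable (fun s : ℝ => Real.exp (-(lam * s)) * (lam * s) ^ n / (n.factorial : ℝ))
      (volume.restrict (Ioi 0)) := by
    by_contra hc
    rw [integral_undef hc] at hint
    exact (inv_pos.2 hl).ne hint
  rw [← hint, ofReal_integral_eq_lintegral_ofReal hi]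
  filter_upwards [ae_restrict_mem measurableSet_Ioi] with s hs
  have : 0 < s := hs
  simp only [Pi.zero_apply]
  positivity

lemma IsPoissonProcess.measurable_floor (hN : IsPoissonProcess P N lam) :
    Measurable fun p : Ω × ℝ => ⌊N p.2 p.1⌋₊ :=
  Nat.measurable_floor.comp hN.measurable_uncurry

lemma IsPoissonProcess.cast_floor (hN : IsPoissonProcess P N lam) (s : ℝ) (ω : Ω) :
    ((⌊N s ω⌋₊ : ℕ) : ℝ) = N s ω := by
  obtain ⟨n, hn⟩ := hN.natValued s ω
  simp [hn]

/-- The expected occupation measure of a Poisson process is `1/λ` times counting measure. -/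
lemma occupation_eq [IsProbabilityMeasure P] (hN : IsPoissonProcess P N lam) :
    (P.prod (volume.restrict (Ioi (0 : ℝ)))).map (fun p : Ω × ℝ => ⌊N p.2 p.1⌋₊)
      = ENNReal.ofReal lam⁻¹ • Measure.count := by
  refine Measure.ext_of_singleton fun n => ?_
  have hm := hN.measurable_floor (measurableSet_singleton n)
  rw [Measure.map_apply hN.measurable_floor (measurableSet_singleton n),
    Measure.prod_apply_symm hm, Measure.smul_apply, Measure.count_singleton, smul_eq_mul,
    mul_one, ← lintegral_poisson_weight hN.lam_pos n]
  refine setLIntegral_congr_fun measurableSet_Ioi fun s hs => ?_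
  have hlaw := hN.law 0 s le_rfl (mem_Ioi.1 hs).le n
  rw [sub_zero] at hlaw
  rw [← hlaw]
  congr 1
  ext ω
  simp only [mem_preimage, mem_singleton_iff, mem_ofPred_eq, hN.zero ω 0 le_rfl, sub_zero]
  rw [← hN.cast_floor s ω, Nat.cast_inj, Nat.floor_natCast]

lemma summable_weighted {h : ℕ → ℝ} {C : ℝ} (hC : ∀ n, |h n| ≤ C) (x : ℕ) :
    Summable fun n : ℕ => h (n + x) * Real.exp (-(n : ℝ)) := by
  refine Summable.of_norm_bounded (Real.summable_exp_neg_nat.mul_left C) fun n => ?_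
  rw [norm_mul, Real.norm_eq_abs, Real.norm_of_nonneg (Real.exp_pos _).le]
  exact mul_le_mul_of_nonneg_right (hC _) (Real.exp_pos _).le

lemma htilde_eq_tsum [IsProbabilityMeasure P] (hN : IsPoissonProcess P N lam) (γ : ℝ)
    {h : ℕ → ℝ} {C : ℝ} (hC : ∀ n, |h n| ≤ C) (x : ℕ) :
    ∫ ω, (∫ s in Set.Ioi (0 : ℝ),
        γ * lam * h (Nat.floor (N s ω) + x) * Real.exp (-(N s ω))) ∂P
      = γ * ∑' n : ℕ, h (n + x) * Real.exp (-(n : ℝ)) := by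
  set k : ℕ → ℝ := fun n => γ * lam * (h (n + x) * Real.exp (-(n : ℝ))) with hk
  have hsum : Summable k := (summable_weighted hC x).mul_left _
  have hF : ∀ (s : ℝ) (ω : Ω), γ * lam * h (Nat.floor (N s ω) + x) * Real.exp (-(N s ω))
      = k ⌊N s ω⌋₊ := by
    intro s ω
    simp only [hk, hN.cast_floor, mul_assoc]
  simp_rw [hF]
  have hcount : Integrable k Measure.count := integrable_count_iff.2 hsum.norm
  have hk_int : Integrable k
      ((P.prod (volume.restrict (Ioi (0 : ℝ)))).map (fun p : Ω × ℝ => ⌊N p.2 p.1⌋₊)) := by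
    rw [occupation_eq hN]
    exact hcount.smul_measure ENNReal.ofReal_ne_top
  have hcomp : Integrable (fun p : Ω × ℝ => k ⌊N p.2 p.1⌋₊)
      (P.prod (volume.restrict (Ioi (0 : ℝ)))) :=
    hk_int.comp_measurable hN.measurable_floor
  rw [integral_integral hcomp,
    ← integral_map hN.measurable_floor.aemeasurable hk_int.aestronglyMeasurable,
    occupation_eq hN, integral_smul_measure, integral_countable hcount]
  have hl := hN.lam_pos
  simp only [measureReal_def, Measure.count_singleton, ENNReal.toReal_one, one_mul,
    ENNReal.toReal_ofReal (inv_pos.2 hl).le, smul_eq_mul, hk]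
  rw [tsum_mul_left, mul_comm γ lam, mul_assoc, inv_mul_cancel_left₀ hl.ne']

end Occupation

/-- With `γ = 1 - e⁻¹` and `h̃(x) = E[∫_0^∞ γ λ h(N_s + x) e^{-N_s} ds]` for a bounded
`h : ℕ → ℝ`, one has `h̃(x) = γ h(x) + (1 - γ) h̃(x + 1)` for every `x ∈ ℕ`. -/
theorem htilde_recursion
    {Ω : Type*} {m0 : MeasurableSpace Ω} (P : Measure Ω) [IsProbabilityMeasure P]
    (N : ℝ → Ω → ℝ) (lam : ℝ) (hN : IsPoissonProcess P N lam)
    (γ : ℝ) (hγ : γ = 1 - Real.exp (-1))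
    (h : ℕ → ℝ) (hh_bdd : ∃ C : ℝ, ∀ n : ℕ, |h n| ≤ C)
    (til : ℕ → ℝ)
    (htil : ∀ x : ℕ, til x =
      ∫ ω, (∫ s in Set.Ioi (0 : ℝ),
        γ * lam * h (Nat.floor (N s ω) + x) * Real.exp (-(N s ω))) ∂P) :
    ∀ x : ℕ, til x = γ * h x + (1 - γ) * til (x + 1) := by
  obtain ⟨C, hC⟩ := hh_bdd
  intro x
  rw [htil, htil, htilde_eq_tsum hN γ hC, htilde_eq_tsum hN γ hC,
    (summable_weighted hC x).tsum_eq_zero_add]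
  have hshift : ∀ n : ℕ, h (n + 1 + x) * Real.exp (-((n + 1 : ℕ) : ℝ))
      = (1 - γ) * (h (n + (x + 1)) * Real.exp (-(n : ℝ))) := by
    intro n
    have he : Real.exp (-((n + 1 : ℕ) : ℝ)) = Real.exp (-1) * Real.exp (-(n : ℝ)) := by
      rw [← Real.exp_add]
      congr 1
      push_cast
      ring
    rw [he, hγ, add_assoc, add_comm 1 x]
    ring
  simp_rw [hshift]
  rw [tsum_mul_left]
  simp only [zero_add, Nat.cast_zero, neg_zero, Real.exp_zero, mul_one]
  ring
end
end

section
/- Let γ := 1 − e^{−1} and, for a bounded Borel function h : ℕ → ℝ, define h̃(x) := E[ ∫_0^∞ γ λ h(N_s + x) e^{−N_s} ds ] for x ∈ ℕ. Then for every t ≥ 0, E[ ∫_t^∞ γ λ h(N_s) e^{−N_s} ds | F_t ] = h̃(N_t) · e^{−N_t} almost surely. -/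
/-!
For `s > t` write `N_s = (N_s - N_t) + N_t`. The increment is independent of `F_t` and has the law
of `N_{s-t}`, so with `G u x := E[γ λ h(N_u + x) e^{-N_u}]` the conditional expectation of
`γ λ h(N_s) e^{-N_s}` given `F_t` is `G (s - t) N_t · e^{-N_t}`
(`IsPoissonProcess.setIntegral_incr`). Integrating over `s > t` and substituting `u = s - t` gives
`∫_0^∞ G u N_t du · e^{-N_t} = h̃(N_t) e^{-N_t}`.

The exchanges of `ds` and `dP` are Fubini's theorem. They need joint measurability of
`(s, ω) ↦ N_s(ω)` (`IsPoissonProcess.measurable_uncurry`) and integrability of `e^{-N_s(ω)}` on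
`(t, ∞) × Ω` (`IsPoissonProcess.integrable_exp_neg`), which holds because
`E[e^{-N_s}] = e^{-λ (1 - e^{-1}) s}`.
-/

open MeasureTheory ProbabilityTheory Filter Set
open scoped ENNReal

noncomputable section

lemma measurable_natFil {Ω : Type*} (N : ℝ → Ω → ℝ) (t : ℝ) : Measurable[natFil N t] (N t) :=
  (comap_measurable (N t)).mono
    (le_iSup₂_of_le (f := fun (u : ℝ) (_ : u ≤ t) =>
      MeasurableSpace.comap (N u) inferInstance) t le_rfl le_rfl) le_rfl

namespace IsPoissonProcess

variable {Ω : Type*} {m0 : MeasurableSpace Ω} {P : Measure Ω} {N : ℝ → Ω → ℝ} {lam : ℝ}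

/-- Joint measurability of the process, from right-continuity: `N s` is the limit of `N` at the
grid points `(⌊s (n + 1)⌋ + 1) / (n + 1) ↓ s`, and each approximant depends on `s` only through
an integer. -/
lemma measurable_uncurry_s17 (hN : IsPoissonProcess P N lam) :
    Measurable (fun p : ℝ × Ω => N p.1 p.2) := by
  have happ : ∀ n : ℕ, Measurable
      (fun p : ℝ × Ω => N (((⌊p.1 * ((n : ℝ) + 1)⌋ : ℝ) + 1) / ((n : ℝ) + 1)) p.2) := by
    intro n
    have h1 : Measurable (fun q : ℤ × Ω => N (((q.1 : ℝ) + 1) / ((n : ℝ) + 1)) q.2) :=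
      measurable_from_prod_countable_right fun k => hN.meas (((k : ℝ) + 1) / ((n : ℝ) + 1))
    have h2 : Measurable (fun p : ℝ × Ω => ((⌊p.1 * ((n : ℝ) + 1)⌋, p.2) : ℤ × Ω)) := by
      fun_prop
    exact h1.comp h2
  refine measurable_of_tendsto_metrizable happ ?_
  rw [tendsto_pi_nhds]
  rintro ⟨s, ω⟩
  have hle : ∀ n : ℕ, s ≤ ((⌊s * ((n : ℝ) + 1)⌋ : ℝ) + 1) / ((n : ℝ) + 1) := by
    intro n
    rw [le_div_iff₀ (by positivity)]
    exact (Int.lt_floor_add_one _).le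
  have hlim : Tendsto (fun n : ℕ => ((⌊s * ((n : ℝ) + 1)⌋ : ℝ) + 1) / ((n : ℝ) + 1)) atTop
      (nhds s) := by
    have hub : Tendsto (fun n : ℕ => s + 1 / ((n : ℝ) + 1)) atTop (nhds s) := by
      simpa using (tendsto_const_nhds (x := s)).add
        tendsto_one_div_add_atTop_nhds_zero_nat
    refine tendsto_of_tendsto_of_tendsto_of_le_of_le tendsto_const_nhds hub hle fun n => ?_
    have hn : (0 : ℝ) < (n : ℝ) + 1 := by positivity
    have := Int.floor_le (s * ((n : ℝ) + 1))
    rw [div_le_iff₀ hn, add_mul, one_div, inv_mul_cancel₀ hn.ne']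
    linarith
  exact (hN.rightCont ω s).tendsto.comp
    (tendsto_nhdsWithin_iff.2 ⟨hlim, Eventually.of_forall hle⟩)

lemma natCast_floor (hN : IsPoissonProcess P N lam) (t : ℝ) (ω : Ω) :
    ((⌊N t ω⌋₊ : ℕ) : ℝ) = N t ω := by
  obtain ⟨n, hn⟩ := hN.natValued t ω
  simp [hn]

lemma incr_natValued (hN : IsPoissonProcess P N lam) {s t : ℝ} (hst : s ≤ t) (ω : Ω) :
    ∃ k : ℕ, N t ω - N s ω = k := by
  obtain ⟨n, hn⟩ := hN.natValued t ω
  obtain ⟨m, hm⟩ := hN.natValued s ω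
  have h : N s ω ≤ N t ω := hN.mono ω hst
  rw [hn, hm] at *
  exact ⟨n - m, by rw [Nat.cast_sub (by exact_mod_cast h)]⟩

lemma map_incr (hN : IsPoissonProcess P N lam) {s t : ℝ} (hs : 0 ≤ s) (hst : s ≤ t) :
    P.map (fun ω => ⌊N t ω - N s ω⌋₊) = poissonMeasure (lam * (t - s)).toNNReal := by
  have hmeas : Measurable (fun ω => ⌊N t ω - N s ω⌋₊) :=
    Nat.measurable_floor.comp ((hN.meas t).sub (hN.meas s))
  refine Measure.ext_of_singleton fun n => ?_
  rw [Measure.map_apply hmeas (measurableSet_singleton n), poissonMeasure_singleton,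
    Real.coe_toNNReal _ (mul_nonneg hN.lam_pos.le (sub_nonneg.2 hst)), ← hN.law s t hs hst n]
  congr 1
  ext ω
  obtain ⟨k, hk⟩ := hN.incr_natValued hst ω
  simp [hk]

lemma map_floor (hN : IsPoissonProcess P N lam) {t : ℝ} (ht : 0 ≤ t) :
    P.map (fun ω => ⌊N t ω⌋₊) = poissonMeasure (lam * t).toNNReal := by
  simpa [hN.zero _ 0 le_rfl] using hN.map_incr le_rfl ht

/-- The Laplace transform of the Poisson law at `1`. -/
lemma integral_exp_neg (hN : IsPoissonProcess P N lam) {t : ℝ} (ht : 0 ≤ t) :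
    ∫ ω, Real.exp (-(N t ω)) ∂P = Real.exp (-(lam * (1 - Real.exp (-1))) * t) := by
  have hmeas : Measurable (fun ω => ⌊N t ω⌋₊) := Nat.measurable_floor.comp (hN.meas t)
  have h1 : ∫ ω, Real.exp (-(N t ω)) ∂P
      = ∫ n : ℕ, Real.exp (-(n : ℝ)) ∂(P.map fun ω => ⌊N t ω⌋₊) := by
    rw [integral_map hmeas.aemeasurable (by fun_prop)]
    simp_rw [hN.natCast_floor]
  rw [h1, hN.map_floor ht, integral_poissonMeasure,
    Real.coe_toNNReal _ (mul_nonneg hN.lam_pos.le ht)]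
  have h2 := (NormedSpace.expSeries_div_hasSum_exp (lam * t * Real.exp (-1))).mul_left
    (Real.exp (-(lam * t)))
  rw [← Real.exp_eq_exp_ℝ, ← Real.exp_add] at h2
  have h3 : (fun n : ℕ => (Real.exp (-(lam * t)) * (lam * t) ^ n / (n.factorial : ℝ))
      • Real.exp (-(n : ℝ))) = fun n : ℕ => Real.exp (-(lam * t)) *
        ((lam * t * Real.exp (-1)) ^ n / (n.factorial : ℝ)) := by
    funext n
    rw [mul_pow _ (Real.exp (-1)), ← Real.exp_nat_mul, smul_eq_mul]
    ring_nf
  rw [h3, h2.tsum_eq]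
  ring_nf

/-- Since `E[e^{-N_s}]` decays exponentially in `s`, the dominating function `e^{-N_s(ω)}` of the
Fubini arguments is integrable on `(t, ∞) × Ω`. -/
lemma integrable_exp_neg [IsProbabilityMeasure P] (hN : IsPoissonProcess P N lam)
    {t : ℝ} (ht : 0 ≤ t) :
    Integrable (fun p : ℝ × Ω => Real.exp (-(N p.1 p.2)))
      ((volume.restrict (Ioi t)).prod P) := by
  have hm := hN.measurable_uncurry_s17
  have hpos : ∀ s ω, 0 ≤ N s ω := fun s ω => by
    obtain ⟨n, hn⟩ := hN.natValued s ω
    simp [hn]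
  rw [integrable_prod_iff (by fun_prop)]
  constructor
  · refine Eventually.of_forall fun s => Integrable.of_bound
      (hN.meas s).neg.exp.aestronglyMeasurable 1 (Eventually.of_forall fun ω => ?_)
    simpa using hpos s ω
  · have hc : 0 < lam * (1 - Real.exp (-1)) :=
      mul_pos hN.lam_pos (sub_pos.2 (by simp))
    refine (integrableOn_exp_mul_Ioi (a := -(lam * (1 - Real.exp (-1)))) (by linarith) t).congr_fun
      (fun s hs => ?_) measurableSet_Ioi
    simp only [Real.norm_eq_abs, Real.abs_exp]
    exact (hN.integral_exp_neg (ht.trans (le_of_lt hs))).symm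

lemma natFil_le (hN : IsPoissonProcess P N lam) (t : ℝ) : natFil N t ≤ m0 :=
  iSup₂_le fun u _ => (hN.meas u).comap_le

/-- The Markov property in set-integral form: on `A ∈ F_t`, the increment `N_s - N_t` may be
integrated out separately from `N_t`, as an independent copy of `N_{s-t}`. The proof applies
the product form of the joint law to the increment and to the pair `(N_t, 1_A)`. -/
lemma setIntegral_incr [IsProbabilityMeasure P] (hN : IsPoissonProcess P N lam)
    {s t : ℝ} (ht : 0 ≤ t) (hts : t ≤ s) {A : Set Ω} (hA : MeasurableSet[natFil N t] A)
    (φ : ℕ → ℕ → ℝ) {C : ℝ} (hφ : ∀ d x, |φ d x| ≤ C) :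
    ∫ ω in A, φ ⌊N s ω - N t ω⌋₊ ⌊N t ω⌋₊ ∂P
      = ∫ ω in A, (∫ ω', φ ⌊N (s - t) ω'⌋₊ ⌊N t ω⌋₊ ∂P) ∂P := by
  have hA0 : MeasurableSet A := hN.natFil_le t A hA
  set D : Ω → ℕ := fun ω => ⌊N s ω - N t ω⌋₊ with hD
  set Y : Ω → ℕ × ℝ := fun ω => (⌊N t ω⌋₊, A.indicator (fun _ => (1 : ℝ)) ω) with hY
  have hDm : Measurable D := Nat.measurable_floor.comp ((hN.meas s).sub (hN.meas t))
  have hYm' : Measurable[natFil N t] Y :=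
    Measurable.prodMk (Nat.measurable_floor.comp (measurable_natFil N t))
      (measurable_const.indicator hA)
  have hYm : Measurable Y := hYm'.mono (hN.natFil_le t) le_rfl
  have hind : IndepFun D Y P := by
    rw [IndepFun_iff_Indep]
    refine indep_of_indep_of_le_left (indep_of_indep_of_le_right (hN.indep t s ht hts)
      hYm'.comap_le) ?_
    exact Measurable.comap_le (Nat.measurable_floor.comp (comap_measurable _))
  have hlaw := (indepFun_iff_map_prod_eq_prod_map_map hDm.aemeasurable hYm.aemeasurable).1 hind
  have hDlaw : P.map D = P.map (fun ω => ⌊N (s - t) ω⌋₊) := by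
    rw [hN.map_incr ht hts, hN.map_floor (sub_nonneg.2 hts)]
  have hD'm : Measurable (fun ω => ⌊N (s - t) ω⌋₊) := Nat.measurable_floor.comp (hN.meas _)
  have : IsProbabilityMeasure (P.map D) := Measure.isProbabilityMeasure_map hDm.aemeasurable
  have : IsProbabilityMeasure (P.map Y) := Measure.isProbabilityMeasure_map hYm.aemeasurable
  have hφm : Measurable (fun q : ℕ × ℕ × ℝ => φ q.1 q.2.1) :=
    (measurable_of_countable (fun r : ℕ × ℕ => φ r.1 r.2)).comp
      (measurable_fst.prodMk (measurable_fst.comp measurable_snd))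
  have hFm : Measurable (fun q : ℕ × ℕ × ℝ => q.2.2 * φ q.1 q.2.1) :=
    (measurable_snd.comp measurable_snd).mul hφm
  have hbase : Integrable (fun ω => A.indicator (fun _ => (1 : ℝ)) ω * φ (D ω) ⌊N t ω⌋₊) P := by
    refine Integrable.of_bound
      (hFm.comp (hDm.prodMk hYm)).aestronglyMeasurable C (Eventually.of_forall fun ω => ?_)
    have h0 := hφ (D ω) ⌊N t ω⌋₊
    by_cases hω : ω ∈ A
    · simpa [hω] using h0
    · simpa [hω] using (abs_nonneg _).trans h0
  have hint : Integrable (fun q : ℕ × ℕ × ℝ => q.2.2 * φ q.1 q.2.1)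
      ((P.map D).prod (P.map Y)) := by
    rw [← hlaw, integrable_map_measure hFm.aestronglyMeasurable (hDm.prodMk hYm).aemeasurable]
    exact hbase
  have hψm : Measurable (fun y : ℕ × ℝ => y.2 * ∫ ω', φ ⌊N (s - t) ω'⌋₊ y.1 ∂P) :=
    measurable_snd.mul ((measurable_of_countable
      (fun x : ℕ => ∫ ω', φ ⌊N (s - t) ω'⌋₊ x ∂P)).comp measurable_fst)
  calc ∫ ω in A, φ (D ω) ⌊N t ω⌋₊ ∂P
      = ∫ ω, (Y ω).2 * φ (D ω) (Y ω).1 ∂P := by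
        rw [← integral_indicator hA0]
        congr 1 with ω
        by_cases hω : ω ∈ A <;> simp [hY, hω]
    _ = ∫ q, q.2.2 * φ q.1 q.2.1 ∂(P.map fun ω => (D ω, Y ω)) :=
        (integral_map (hDm.prodMk hYm).aemeasurable hFm.aestronglyMeasurable).symm
    _ = ∫ y, ∫ d, y.2 * φ d y.1 ∂(P.map D) ∂(P.map Y) := by
        rw [hlaw, integral_prod_symm _ hint]
    _ = ∫ y, y.2 * (∫ ω', φ ⌊N (s - t) ω'⌋₊ y.1 ∂P) ∂(P.map Y) := by
        congr 1 with y
        rw [integral_const_mul, hDlaw,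
          integral_map hD'm.aemeasurable (measurable_of_countable _).aestronglyMeasurable]
    _ = ∫ ω, (Y ω).2 * (∫ ω', φ ⌊N (s - t) ω'⌋₊ (Y ω).1 ∂P) ∂P :=
        integral_map hYm.aemeasurable hψm.aestronglyMeasurable
    _ = ∫ ω in A, (∫ ω', φ ⌊N (s - t) ω'⌋₊ ⌊N t ω⌋₊ ∂P) ∂P := by
        rw [← integral_indicator hA0]
        congr 1 with ω
        by_cases hω : ω ∈ A <;> simp [hY, hω]

end IsPoissonProcess

/-- With `γ = 1 - e⁻¹` and `h̃` as above, for every `t ≥ 0`: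
`E[∫_t^∞ γ λ h(N_s) e^{-N_s} ds | F_t] = h̃(N_t) e^{-N_t}` a.s. -/
theorem htilde_projection
    {Ω : Type*} {m0 : MeasurableSpace Ω} (P : Measure Ω) [IsProbabilityMeasure P]
    (N : ℝ → Ω → ℝ) (lam : ℝ) (hN : IsPoissonProcess P N lam)
    (γ : ℝ) (hγ : γ = 1 - Real.exp (-1))
    (h : ℕ → ℝ) (hh_bdd : ∃ C : ℝ, ∀ n : ℕ, |h n| ≤ C)
    (til : ℕ → ℝ)
    (htil : ∀ x : ℕ, til x =
      ∫ ω, (∫ s in Set.Ioi (0 : ℝ),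
        γ * lam * h (Nat.floor (N s ω) + x) * Real.exp (-(N s ω))) ∂P) :
    ∀ t : ℝ, 0 ≤ t →
      P[(fun ω => ∫ s in Set.Ioi t,
          γ * lam * h (Nat.floor (N s ω)) * Real.exp (-(N s ω))) | natFil N t]
        =ᵐ[P] fun ω => til (Nat.floor (N t ω)) * Real.exp (-(N t ω)) := by
  intro t ht
  obtain ⟨C, hC⟩ := hh_bdd
  have hC0 : 0 ≤ C := (abs_nonneg _).trans (hC 0)
  have hNm := hN.measurable_uncurry_s17
  have hhm : Measurable h := measurable_of_countable h
  set K : ℝ := |γ * lam| * C with hK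
  have hbd : ∀ (n : ℕ) (y : ℝ), ‖γ * lam * h n * Real.exp (-y)‖ ≤ K * Real.exp (-y) := by
    intro n y
    rw [norm_mul, norm_mul, Real.norm_eq_abs, Real.norm_eq_abs, Real.norm_eq_abs, Real.abs_exp]
    have := hC n
    rw [hK]
    gcongr
  have hfl : Measurable (fun p : ℝ × Ω => ⌊N p.1 p.2⌋₊) := Nat.measurable_floor.comp hNm
  have hXm : Measurable[natFil N t] (fun ω => ⌊N t ω⌋₊) :=
    Nat.measurable_floor.comp (measurable_natFil N t)
  have hXm0 : Measurable (fun ω => ⌊N t ω⌋₊) := hXm.mono (hN.natFil_le t) le_rfl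
  -- `|h| ≤ C` makes `K * exp (-N)` dominate, so Fubini applies for every shift `x`.
  have hint : ∀ (x : ℕ) {r : ℝ}, 0 ≤ r → Integrable
      (fun p : ℝ × Ω => γ * lam * h (⌊N p.1 p.2⌋₊ + x) * Real.exp (-(N p.1 p.2)))
      ((volume.restrict (Ioi r)).prod P) := by
    intro x r hr
    refine ((hN.integrable_exp_neg hr).const_mul K).mono' ?_
      (Eventually.of_forall fun p => hbd _ _)
    exact (((hhm.comp (hfl.add_const x)).const_mul (γ * lam)).mul
      hNm.neg.exp).aestronglyMeasurable
  -- `G u x` is the integrand of `til x` at time `u`, averaged over `Ω`.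
  set G : ℝ → ℕ → ℝ := fun u x =>
    ∫ ω, γ * lam * h (⌊N u ω⌋₊ + x) * Real.exp (-(N u ω)) ∂P with hG
  have htilG : ∀ x, til x = ∫ u in Ioi (0 : ℝ), G u x := by
    intro x
    rw [htil x]
    exact (integral_integral_swap (hint x le_rfl)).symm
  have hshift : ∀ x, ∫ s in Ioi t, G (s - t) x = til x := by
    intro x
    rw [htilG x]
    have := (measurePreserving_sub_right volume t).setIntegral_preimage_emb
      (measurableEmbedding_subRight t) (fun u => G u x) (Ioi 0)
    simpa using this
  have hGm : Measurable (fun q : ℝ × ℕ => G q.1 q.2) := by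
    refine measurable_from_prod_countable_left fun x => ?_
    have hm : Measurable
        (fun p : ℝ × Ω => γ * lam * h (⌊N p.1 p.2⌋₊ + x) * Real.exp (-(N p.1 p.2))) :=
      ((hhm.comp (hfl.add_const x)).const_mul (γ * lam)).mul hNm.neg.exp
    exact hm.stronglyMeasurable.integral_prod_right'.measurable
  have hexpP : ∀ s, 0 ≤ s → Integrable (fun ω => Real.exp (-(N s ω))) P := fun s hs =>
    Integrable.of_integral_ne_zero (by rw [hN.integral_exp_neg hs]; positivity)
  have hGbd : ∀ u x, 0 ≤ u → ‖G u x‖ ≤ K * Real.exp (-(lam * (1 - Real.exp (-1))) * u) := by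
    intro u x hu
    rw [← hN.integral_exp_neg hu, ← integral_const_mul]
    exact norm_integral_le_of_norm_le ((hexpP u hu).const_mul K)
      (Eventually.of_forall fun ω => hbd _ _)
  -- The dominating function is `K * exp (-lam (1 - e⁻¹) (s - t)) * exp (-N_t ω)`, a product of
  -- integrable functions of `s` and of `ω`.
  have hint2 : Integrable
      (fun p : ℝ × Ω => G (p.1 - t) ⌊N t p.2⌋₊ * Real.exp (-(N t p.2)))
      ((volume.restrict (Ioi t)).prod P) := by
    have hc : 0 < lam * (1 - Real.exp (-1)) := mul_pos hN.lam_pos (sub_pos.2 (by simp))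
    have h1 : Integrable (fun s => K * Real.exp (-(lam * (1 - Real.exp (-1))) * (s - t)))
        (volume.restrict (Ioi t)) := by
      have h0 := ((integrableOn_exp_mul_Ioi (a := -(lam * (1 - Real.exp (-1))))
        (by linarith) t).const_mul (K * Real.exp (lam * (1 - Real.exp (-1)) * t)))
      refine h0.congr (Eventually.of_forall fun s => ?_)
      simp only [mul_assoc, ← Real.exp_add]
      ring_nf
    refine (h1.mul_prod (hexpP t ht)).mono' ?_ ?_
    · exact ((hGm.comp ((measurable_fst.sub_const t).prodMk (hXm0.comp measurable_snd))).mul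
        ((hN.meas t).comp measurable_snd).neg.exp).aestronglyMeasurable
    · have h2 : ∀ᵐ p ∂((volume.restrict (Ioi t)).prod P), p.1 ∈ Ioi t :=
        Measure.quasiMeasurePreserving_fst.ae (ae_restrict_mem measurableSet_Ioi)
      filter_upwards [h2] with p hp
      rw [norm_mul, Real.norm_eq_abs (Real.exp _), Real.abs_exp]
      exact mul_le_mul_of_nonneg_right (hGbd _ _ (sub_nonneg.2 (le_of_lt hp))) (Real.exp_nonneg _)
  have hright : ∀ ω, ∫ s in Ioi t, G (s - t) ⌊N t ω⌋₊ * Real.exp (-(N t ω))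
      = til ⌊N t ω⌋₊ * Real.exp (-(N t ω)) := fun ω => by
    rw [integral_mul_const, hshift]
  have hgint : Integrable (fun ω => til ⌊N t ω⌋₊ * Real.exp (-(N t ω))) P := by
    simpa only [hright] using hint2.integral_prod_right
  have hf := hint 0 ht
  simp only [add_zero] at hf
  have hrestr : ∀ (A : Set Ω) (F : ℝ × Ω → ℝ), Integrable F ((volume.restrict (Ioi t)).prod P) →
      Integrable F ((volume.restrict (Ioi t)).prod (P.restrict A)) := fun A F hF =>
    hF.mono_measure (Measure.prod_mono le_rfl Measure.restrict_le_self)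
  refine (ae_eq_condExp_of_forall_setIntegral_eq (hN.natFil_le t) hf.integral_prod_right
    (fun A _ _ => hgint.integrableOn) (fun A hA _ => ?_) ?_).symm
  · calc ∫ ω in A, til ⌊N t ω⌋₊ * Real.exp (-(N t ω)) ∂P
        = ∫ ω in A, (∫ s in Ioi t, G (s - t) ⌊N t ω⌋₊ * Real.exp (-(N t ω))) ∂P := by
          simp only [hright]
      _ = ∫ s in Ioi t, ∫ ω in A, G (s - t) ⌊N t ω⌋₊ * Real.exp (-(N t ω)) ∂P :=
          (integral_integral_swap
            (f := fun s ω => G (s - t) ⌊N t ω⌋₊ * Real.exp (-(N t ω))) (hrestr A _ hint2)).symm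
      _ = ∫ s in Ioi t, ∫ ω in A, γ * lam * h ⌊N s ω⌋₊ * Real.exp (-(N s ω)) ∂P := by
          refine setIntegral_congr_fun measurableSet_Ioi fun s hs => ?_
          have hts : t ≤ s := le_of_lt hs
          -- On the increment `d = N_s - N_t` and `x = N_t` the integrand factors as
          -- `γ lam h(d + x) e^{-d} · e^{-x}`.
          have key := hN.setIntegral_incr ht hts hA
            (fun d x => γ * lam * h (d + x) * Real.exp (-(d : ℝ)) * Real.exp (-(x : ℝ)))
            (C := K) (fun d x => by
              rw [abs_mul, Real.abs_exp, ← Real.norm_eq_abs]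
              have h1 : Real.exp (-(d : ℝ)) ≤ 1 := by simp
              have h2 : Real.exp (-(x : ℝ)) ≤ 1 := by simp
              have hK0 : 0 ≤ K := by positivity
              calc _ ≤ (K * Real.exp (-(d : ℝ))) * Real.exp (-(x : ℝ)) := by
                    gcongr; exact hbd _ _
                _ ≤ (K * 1) * 1 := by gcongr
                _ = K := by ring)
          have hfloor : ∀ ω, ⌊N s ω - N t ω⌋₊ + ⌊N t ω⌋₊ = ⌊N s ω⌋₊ ∧
              -((⌊N s ω - N t ω⌋₊ : ℕ) : ℝ) + -((⌊N t ω⌋₊ : ℕ) : ℝ) = -(N s ω) := by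
            intro ω
            obtain ⟨k, hk⟩ := hN.incr_natValued hts ω
            obtain ⟨m, hm⟩ := hN.natValued t ω
            have hs' : N s ω = ((k + m : ℕ) : ℝ) := by push_cast; linarith
            rw [hk, hm, hs']
            simp only [Nat.floor_natCast]
            refine ⟨trivial, ?_⟩
            push_cast
            ring
          simp only [mul_assoc, ← Real.exp_add, (hfloor _).1, (hfloor _).2] at key
          simp only [mul_assoc]
          rw [key]
          congr 1 with ω
          simp only [hG, ← integral_mul_const, hN.natCast_floor, Real.exp_add, mul_assoc]
      _ = ∫ ω in A, (∫ s in Ioi t, γ * lam * h ⌊N s ω⌋₊ * Real.exp (-(N s ω))) ∂P :=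
          integral_integral_swap
            (f := fun s ω => γ * lam * h ⌊N s ω⌋₊ * Real.exp (-(N s ω))) (hrestr A _ hf)
  · exact (((measurable_of_countable til).comp hXm).mul
      (measurable_natFil N t).neg.exp).aestronglyMeasurable
end
end
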